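/- Let R_ko = ℤ₂[η, A, B]/(2η, η³, ηA, A² − 4B). Then B is a nonzerodivisor on R_ko (equivalently, H⁰_{(B)}(R_ko) = 0), and the cokernel of the localization map R_ko → (R_ko)_B inverting B is isomorphic as a ℤ₂[B]-module to (ℤ₂[B, B⁻¹]/ℤ₂[B])^{⊕2} ⊕ ((ℤ/2)[B, B⁻¹]/(ℤ/2)[B])^{⊕2}, the two pairs of summands being generated by the images of 1/B, A/B and η/B, η²/B respectively. -/

import Mathlib

open MvPolynomial

noncomputable section

/-- The ideal of relations defining `π_*(ko) = ℤ₂[η, A, B]/(2η, η³, ηA, A² − 4B)`. -/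
def koRel : Ideal (MvPolynomial (Fin 3) ℤ_[2]) :=
  Ideal.span {2 * X 0, X 0 ^ 3, X 0 * X 1, X 1 ^ 2 - 4 * X 2}

/-- `R_ko = ℤ₂[η, A, B]/(2η, η³, ηA, A² − 4B)`, the homotopy ring of 2-complete
connective real K-theory. -/
abbrev Rko : Type _ := MvPolynomial (Fin 3) ℤ_[2] ⧸ koRel

/-- The class `η ∈ R_ko`. -/
def koEta : Rko := Ideal.Quotient.mk koRel (X 0)

/-- The class `A ∈ R_ko`. -/
def koA : Rko := Ideal.Quotient.mk koRel (X 1)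

/-- The class `B ∈ R_ko` (the Bott element). -/
def koB : Rko := Ideal.Quotient.mk koRel (X 2)

/-- `R_ko` as a module over `ℤ₂[B] = Polynomial ℤ_[2]`, with `B` acting as
multiplication by the Bott element. -/
instance : Module (Polynomial ℤ_[2]) Rko :=
  Module.compHom Rko (Polynomial.aeval koB).toRingHom

/-- `(ℤ/2)[B]` as a module over `ℤ₂[B]`, via reduction of the coefficients mod 2. -/
instance : Module (Polynomial ℤ_[2]) (Polynomial (ZMod 2)) :=
  Module.compHom _ (Polynomial.mapRingHom PadicInt.toZMod)


/-- The localization of `M` away from `x`. -/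
abbrev Loc {R : Type*} [CommRing R] (x : R) (M : Type*) [AddCommGroup M] [Module R M] :=
  LocalizedModule (Submonoid.powers x) M

/-- The canonical localization map `M → M_x`. -/
abbrev locMap {R : Type*} [CommRing R] (x : R) (M : Type*) [AddCommGroup M] [Module R M] :
    M →ₗ[R] Loc x M :=
  LocalizedModule.mkLinearMap (Submonoid.powers x) M

/-- The cokernel `M/x^∞` of the localization map `M → M_x`. -/
abbrev CokLoc {R : Type*} [CommRing R] (x : R) (M : Type*) [AddCommGroup M] [Module R M] :=
  Loc x M ⧸ LinearMap.range (locMap x M)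

/-- `ℤ₂[B, B⁻¹]/ℤ₂[B]`, the cokernel of the inclusion of `ℤ₂[B]` into the
Laurent polynomial ring, as a `ℤ₂[B]`-module. -/
abbrev QZ : Type _ :=
  LaurentPolynomial ℤ_[2] ⧸
    LinearMap.range (Algebra.linearMap (Polynomial ℤ_[2]) (LaurentPolynomial ℤ_[2]))

/-- `(ℤ/2)[B, B⁻¹]/(ℤ/2)[B]`, the cokernel of the inclusion of `(ℤ/2)[B]` into the
Laurent polynomial ring. -/
abbrev Qmod : Type _ :=
  LaurentPolynomial (ZMod 2) ⧸
    LinearMap.range (Algebra.linearMap (Polynomial (ZMod 2)) (LaurentPolynomial (ZMod 2)))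

/-- `(ℤ/2)[B, B⁻¹]/(ℤ/2)[B]` as a `ℤ₂[B]`-module, via reduction of coefficients mod 2. -/
instance : Module (Polynomial ℤ_[2]) Qmod :=
  Module.compHom _ (Polynomial.mapRingHom PadicInt.toZMod)

/-- The cokernel of `R_ko → (R_ko)_B` as a `ℤ₂[B]`-module. -/
instance : Module (Polynomial ℤ_[2]) (CokLoc koB Rko) :=
  Module.compHom _ (Polynomial.aeval koB).toRingHom

abbrev PZ := Polynomial ℤ_[2]
abbrev PF := Polynomial (ZMod 2)

def ev : PZ →+* Rko := (Polynomial.aeval koB).toRingHom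
def red : PZ →+* PF := Polynomial.mapRingHom PadicInt.toZMod

lemma ev_X : ev Polynomial.X = koB := by simp [ev]

lemma ko_two_eta : 2 * koEta = 0 := by
  have : (2 : Rko) = Ideal.Quotient.mk koRel 2 := (map_ofNat (Ideal.Quotient.mk koRel) 2).symm
  rw [koEta, this, ← map_mul, Ideal.Quotient.eq_zero_iff_mem]
  exact Ideal.subset_span (by simp)
lemma ko_eta_cube : koEta ^ 3 = 0 := by
  rw [koEta, ← map_pow, Ideal.Quotient.eq_zero_iff_mem]
  exact Ideal.subset_span (by simp)
lemma ko_eta_A : koEta * koA = 0 := by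
  rw [koEta, koA, ← map_mul, Ideal.Quotient.eq_zero_iff_mem]
  exact Ideal.subset_span (by simp)
lemma ko_A_sq : koA ^ 2 = 4 * koB := by
  have : (4 : Rko) = Ideal.Quotient.mk koRel 4 := (map_ofNat (Ideal.Quotient.mk koRel) 4).symm
  rw [koA, koB, this, ← map_mul, ← map_pow, Ideal.Quotient.eq]
  exact Ideal.subset_span (by simp)

/-- coordinates to element -/
def co (f g h l : PZ) : Rko := ev f + ev g * koA + ev h * koEta + ev l * koEta ^ 2

lemma toZMod_two_surj : Function.Surjective (PadicInt.toZMod : ℤ_[2] →+* ZMod 2) :=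
  ZMod.ringHom_surjective _

lemma red_surj : Function.Surjective red := Polynomial.map_surjective _ toZMod_two_surj

lemma red_eq_zero {h : PZ} (hh : red h = 0) : ∃ k : PZ, h = 2 * k := by
  have : Polynomial.C (2 : ℤ_[2]) ∣ h := by
    rw [Polynomial.C_dvd_iff_dvd_coeff]
    intro i
    have h1 : PadicInt.toZMod (h.coeff i) = 0 := by
      have := congrArg (fun q => Polynomial.coeff q i) hh
      simpa [red] using this
    have h2 : h.coeff i ∈ RingHom.ker (PadicInt.toZMod : ℤ_[2] →+* ZMod 2) := h1
    rw [PadicInt.ker_toZMod, PadicInt.maximalIdeal_eq_span_p, Ideal.mem_span_singleton] at h2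
    simpa using h2
  obtain ⟨k, hk⟩ := this
  exact ⟨k, by rw [hk, map_ofNat]⟩

lemma ev_eta {h : PZ} (hh : red h = 0) : ev h * koEta = 0 := by
  obtain ⟨k, rfl⟩ := red_eq_zero hh
  rw [map_mul, map_ofNat]
  linear_combination ev k * ko_two_eta

lemma co_zero {f g h l : PZ} (hf : f = 0) (hg : g = 0) (hh : red h = 0) (hl : red l = 0) :
    co f g h l = 0 := by
  subst hf hg
  simp only [co, map_zero, zero_mul, ev_eta hh, zero_add]
  linear_combination koEta * ev_eta hl

lemma co_surj (r : Rko) : ∃ f g h l, r = co f g h l := by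
  obtain ⟨p, rfl⟩ := Ideal.Quotient.mk_surjective r
  induction p using MvPolynomial.induction_on with
  | C a =>
    refine ⟨Polynomial.C a, 0, 0, 0, ?_⟩
    simp [co, ev]
    rfl
  | add p q hp hq =>
    obtain ⟨f, g, h, l, e⟩ := hp
    obtain ⟨f', g', h', l', e'⟩ := hq
    refine ⟨f + f', g + g', h + h', l + l', ?_⟩
    rw [map_add, e, e']
    simp only [co, map_add]; ring
  | mul_X p i hp =>
    obtain ⟨f, g, h, l, e⟩ := hp
    rw [map_mul, e]
    fin_cases i
    · refine ⟨0, 0, f, h, ?_⟩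
      change _ * koEta = _
      simp only [co, map_zero]
      linear_combination ev g * ko_eta_A + ev l * ko_eta_cube
    · refine ⟨4 * Polynomial.X * g, f, 0, 0, ?_⟩
      change _ * koA = _
      simp only [co, map_zero, map_mul, map_ofNat, ev_X]
      linear_combination ev g * ko_A_sq + (ev h + ev l * koEta) * ko_eta_A
    · refine ⟨Polynomial.X * f, Polynomial.X * g, Polynomial.X * h, Polynomial.X * l, ?_⟩
      change _ * koB = _
      simp only [co, map_mul, ev_X]
      ring

def phi1 : Rko →+* PZ :=
  Ideal.Quotient.lift koRel
    (MvPolynomial.eval₂Hom Polynomial.C ![0, 2 * Polynomial.X, Polynomial.X ^ 2]) (by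
      intro a ha
      rw [← RingHom.mem_ker]
      revert a
      change koRel ≤ _
      rw [koRel, Ideal.span_le]
      rintro x (rfl | rfl | rfl | rfl)
      · simp
      · simp
      · simp
      · simp; ring)

def F3 : Type := Polynomial PF ⧸ Ideal.span {(Polynomial.X : Polynomial PF) ^ 3}

instance : CommRing F3 :=
  inferInstanceAs (CommRing (Polynomial PF ⧸ Ideal.span {(Polynomial.X : Polynomial PF) ^ 3}))

def mk3 : Polynomial PF →+* F3 :=
  Ideal.Quotient.mk (Ideal.span {(Polynomial.X : Polynomial PF) ^ 3})

lemma mk3_eq_zero (q : Polynomial PF) : mk3 q = 0 ↔ Polynomial.X ^ 3 ∣ q := by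
  rw [← Ideal.mem_span_singleton]
  exact Ideal.Quotient.eq_zero_iff_mem

def phi2 : Rko →+* F3 :=
  Ideal.Quotient.lift koRel
    (MvPolynomial.eval₂Hom
      (((mk3).comp Polynomial.C).comp (Polynomial.C.comp PadicInt.toZMod))
      ![mk3 Polynomial.X, 0, mk3 (Polynomial.C Polynomial.X)]) (by
      have h2 : (2 : F3) = 0 := by
        have : (2 : F3) = mk3 (Polynomial.C (Polynomial.C (2 : ZMod 2))) := by
          rw [map_ofNat, map_ofNat, map_ofNat]
        rw [this, show (2 : ZMod 2) = 0 from rfl, map_zero, map_zero, map_zero]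
      have h4 : (4 : F3) = 0 := by linear_combination 2 * h2
      intro a ha
      rw [← RingHom.mem_ker]
      revert a
      change koRel ≤ _
      rw [koRel, Ideal.span_le]
      rintro x (rfl | rfl | rfl | rfl)
      · simp [h2]
      · simp only [SetLike.mem_coe, RingHom.mem_ker, map_pow, coe_eval₂Hom, eval₂_X, Matrix.cons_val_zero]
        rw [← map_pow, mk3_eq_zero]
      · simp
      · rw [SetLike.mem_coe, RingHom.mem_ker, map_sub, map_mul, map_pow, map_ofNat, h4]
        simp)

lemma phi1_eta : phi1 koEta = 0 := by simp [phi1, koEta]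
lemma phi1_A : phi1 koA = 2 * Polynomial.X := by simp [phi1, koA]
lemma phi1_B : phi1 koB = Polynomial.X ^ 2 := by simp [phi1, koB]
lemma phi2_eta : phi2 koEta = mk3 Polynomial.X := by simp [phi2, koEta]
lemma phi2_A : phi2 koA = 0 := by simp [phi2, koA]
lemma phi2_B : phi2 koB = mk3 (Polynomial.C Polynomial.X) := by simp [phi2, koB]

lemma ev_C (a : ℤ_[2]) : ev (Polynomial.C a) = Ideal.Quotient.mk koRel (MvPolynomial.C a) := by
  simp [ev]; rfl

lemma phi1_ev (f : PZ) : phi1 (ev f) = Polynomial.expand ℤ_[2] 2 f := by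
  have : phi1.comp ev = (Polynomial.expand ℤ_[2] 2 : PZ →+* PZ) := by
    apply Polynomial.ringHom_ext
    · intro a
      rw [RingHom.comp_apply, ev_C]
      simp [phi1]
    · rw [RingHom.comp_apply, ev_X, phi1_B]; simp
  exact congrArg (fun q => q f) this

lemma phi2_ev (f : PZ) : phi2 (ev f) = mk3 (Polynomial.C (red f)) := by
  have : phi2.comp ev = ((mk3).comp Polynomial.C).comp red := by
    apply Polynomial.ringHom_ext
    · intro a
      rw [RingHom.comp_apply, ev_C]
      simp [phi2, red]
    · rw [RingHom.comp_apply, ev_X, phi2_B]; simp [red]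
  exact congrArg (fun q => q f) this

lemma co_inj {f g h l : PZ} (e : co f g h l = 0) : f = 0 ∧ g = 0 ∧ red h = 0 ∧ red l = 0 := by
  have e1 : Polynomial.expand ℤ_[2] 2 f + Polynomial.X * Polynomial.expand ℤ_[2] 2 (2 * g) = 0 := by
    have := congrArg phi1 e
    simp only [co, map_add, map_mul, map_pow, phi1_eta, phi1_A, phi1_ev, map_zero] at this
    rw [map_mul, map_ofNat]
    linear_combination this
  have hf : f = 0 := by
    ext n
    have := congrArg (fun q => Polynomial.coeff q (2 * n)) e1
    simp only [Polynomial.coeff_add, Polynomial.coeff_zero, mul_comm 2 n,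
      Polynomial.coeff_expand_mul (by norm_num : 0 < 2)] at this
    rcases n with _ | n
    · simpa using this
    · rw [show (n + 1) * 2 = (2 * n + 1) + 1 by ring, Polynomial.coeff_X_mul,
        Polynomial.coeff_expand (by norm_num), if_neg (by omega)] at this
      simpa using this
  have hg : g = 0 := by
    subst hf
    have h2 : Polynomial.expand ℤ_[2] 2 (2 * g) = 0 := by
      simpa only [map_zero, zero_add, mul_eq_zero, Polynomial.X_ne_zero, false_or] using e1
    rw [Polynomial.expand_eq_zero (by norm_num)] at h2
    simpa using h2
  have e2 : (Polynomial.X : Polynomial PF) ^ 3 ∣ Polynomial.C (red f) +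
      Polynomial.C (red h) * Polynomial.X + Polynomial.C (red l) * Polynomial.X ^ 2 := by
    have := congrArg phi2 e
    simp only [co, map_add, map_mul, map_pow, phi2_eta, phi2_A, phi2_ev, map_zero] at this
    rw [← mk3_eq_zero]
    simp only [map_add, map_mul, map_pow]
    linear_combination this
  rw [Polynomial.X_pow_dvd_iff] at e2
  refine ⟨hf, hg, ?_, ?_⟩
  · simpa [Polynomial.coeff_X, Polynomial.coeff_X_pow] using e2 1 (by norm_num)
  · simpa [Polynomial.coeff_X, Polynomial.coeff_X_pow] using e2 2 (by norm_num)

lemma co_sub (f g h l f' g' h' l' : PZ) :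
    co f g h l - co f' g' h' l' = co (f - f') (g - g') (h - h') (l - l') := by
  simp only [co, map_sub]; ring

lemma co_mul (p f g h l : PZ) : ev p * co f g h l = co (p * f) (p * g) (p * h) (p * l) := by
  simp only [co, map_mul]; ring

lemma koB_nzd : koB ∈ nonZeroDivisors Rko := by
  rw [mem_nonZeroDivisors_iff_left]
  intro r hr
  obtain ⟨f, g, h, l, rfl⟩ := co_surj r
  rw [← ev_X, co_mul] at hr
  obtain ⟨a, b, c, d⟩ := co_inj hr
  have hX : red Polynomial.X = Polynomial.X := by simp [red]
  rw [map_mul, hX] at c d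
  simp only [mul_eq_zero, Polynomial.X_ne_zero, false_or] at a b c d
  exact co_zero a b c d

abbrev LZ := LaurentPolynomial ℤ_[2]
abbrev LF := LaurentPolynomial (ZMod 2)
abbrev SB := Submonoid.powers koB

def psi : LZ →+* Localization SB :=
  IsLocalization.map (M := Submonoid.powers (Polynomial.X : PZ)) (T := SB) (S := LZ)
    (Localization SB) ev (by
    rintro _ ⟨n, rfl⟩
    exact ⟨n, by simp [ev_X]⟩)

def redL : LZ →+* LF :=
  IsLocalization.map (M := Submonoid.powers (Polynomial.X : PZ))
    (T := Submonoid.powers (Polynomial.X : PF)) _ red (by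
    rintro _ ⟨n, rfl⟩
    exact ⟨n, by simp [red]⟩)

def kpow (n : ℕ) : SB := ⟨koB ^ n, n, rfl⟩

/-- `f / X ^ n` -/
def fr (f : PZ) (n : ℕ) : LZ := Polynomial.toLaurent f * LaurentPolynomial.T (-n)

def frF (f : PF) (n : ℕ) : LF := Polynomial.toLaurent f * LaurentPolynomial.T (-n)

lemma psi_fr (f : PZ) (n : ℕ) : psi (fr f n) = Localization.mk (ev f) (kpow n) := by
  rw [fr, ← LaurentPolynomial.mk'_eq, psi, IsLocalization.map_mk', Localization.mk_eq_mk']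
  congr 1
  ext
  simp [kpow, ev_X]

lemma redL_fr (f : PZ) (n : ℕ) : redL (fr f n) = frF (red f) n := by
  rw [fr, frF, ← LaurentPolynomial.mk'_eq, ← LaurentPolynomial.mk'_eq, redL, IsLocalization.map_mk']
  congr 1
  ext
  simp [red]

lemma psi_toLaurent (f : PZ) : psi (Polynomial.toLaurent f) = algebraMap Rko _ (ev f) := by
  rw [← LaurentPolynomial.algebraMap_eq_toLaurent, psi, IsLocalization.map_eq]

lemma redL_toLaurent (f : PZ) : redL (Polynomial.toLaurent f) = Polynomial.toLaurent (red f) := by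
  rw [← LaurentPolynomial.algebraMap_eq_toLaurent, redL, IsLocalization.map_eq,
    LaurentPolynomial.algebraMap_eq_toLaurent]

def lam (a : Rko) : LZ →ₗ[PZ] CokLoc koB Rko where
  toFun l := Submodule.Quotient.mk (psi l • (LocalizedModule.mk a 1 : Loc koB Rko))
  map_add' x y := by rw [map_add, add_smul, Submodule.Quotient.mk_add]
  map_smul' p x := by
    change (Submodule.Quotient.mk (psi (Polynomial.toLaurent p * x) •
      (LocalizedModule.mk a 1 : Loc koB Rko)) : CokLoc koB Rko) =
      ev p • (Submodule.Quotient.mk (psi x • (LocalizedModule.mk a 1 : Loc koB Rko)))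
    rw [map_mul, psi_toLaurent, mul_smul, algebraMap_smul, Submodule.Quotient.mk_smul]

lemma lam_fr (a : Rko) (f : PZ) (n : ℕ) :
    lam a (fr f n) = Submodule.Quotient.mk (LocalizedModule.mk (ev f * a) (kpow n)) := by
  change (Submodule.Quotient.mk (psi (fr f n) •
    (LocalizedModule.mk a 1 : Loc koB Rko)) : CokLoc koB Rko) = _
  rw [psi_fr, LocalizedModule.mk_smul_mk, mul_one, smul_eq_mul]

def bz : LZ →ₗ[PZ] QZ := Submodule.mkQ _

def bf : LZ →ₗ[PZ] Qmod where
  toFun l := Submodule.Quotient.mk (redL l)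
  map_add' x y := by rw [map_add, Submodule.Quotient.mk_add]
  map_smul' p x := by
    change (Submodule.Quotient.mk (redL (Polynomial.toLaurent p * x)) : Qmod) =
      red p • (Submodule.Quotient.mk (redL x) : Qmod)
    rw [map_mul, redL_toLaurent, ← Submodule.Quotient.mk_smul]
    rfl

abbrev DD := (LZ × LZ) × (LZ × LZ)

def al : DD →ₗ[PZ] CokLoc koB Rko :=
  ((lam 1).coprod (lam koA)).coprod ((lam koEta).coprod (lam (koEta ^ 2)))

def be : DD →ₗ[PZ] (QZ × QZ) × (Qmod × Qmod) :=
  (bz.prodMap bz).prodMap (bf.prodMap bf)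

lemma fr_mul (f : PZ) (m n : ℕ) : fr (f * Polynomial.X ^ m) (n + m) = fr f n := by
  simp only [fr, map_mul, Polynomial.toLaurent_X_pow, LaurentPolynomial.mul_T_assoc]
  congr 2
  push_cast; ring

lemma fr_surj (l : LZ) : ∃ f n, l = fr f n := by
  induction l using LaurentPolynomial.induction_on_mul_T with
  | mul_T f n => exact ⟨f, n, rfl⟩

lemma fr_surj4 (d : DD) : ∃ f g h l n, d = ((fr f n, fr g n), (fr h n, fr l n)) := by
  obtain ⟨⟨a, b⟩, ⟨c, d⟩⟩ := d
  obtain ⟨f, i, rfl⟩ := fr_surj a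
  obtain ⟨g, j, rfl⟩ := fr_surj b
  obtain ⟨h, k, rfl⟩ := fr_surj c
  obtain ⟨l, m, rfl⟩ := fr_surj d
  refine ⟨f * Polynomial.X ^ (j + k + m), g * Polynomial.X ^ (i + k + m),
    h * Polynomial.X ^ (i + j + m), l * Polynomial.X ^ (i + j + k), i + j + k + m, ?_⟩
  rw [← fr_mul f (j + k + m) i, ← fr_mul g (i + k + m) j, ← fr_mul h (i + j + m) k,
    ← fr_mul l (i + j + k) m]
  congr 3 <;> ring

lemma mk_add_same (a b : Rko) (s : SB) :
    (LocalizedModule.mk a s : Loc koB Rko) + LocalizedModule.mk b s = LocalizedModule.mk (a + b) s := by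
  rw [LocalizedModule.mk_add_mk, ← smul_add, LocalizedModule.mk_cancel_common_left]

lemma al_fr (f g h l : PZ) (n : ℕ) : al ((fr f n, fr g n), (fr h n, fr l n)) =
    Submodule.Quotient.mk (LocalizedModule.mk (co f g h l) (kpow n)) := by
  simp only [al, LinearMap.coprod_apply, lam_fr]
  rw [← Submodule.Quotient.mk_add, ← Submodule.Quotient.mk_add, ← Submodule.Quotient.mk_add,
    mk_add_same, mk_add_same, mk_add_same, co]
  congr 2
  ring

lemma al_surj : Function.Surjective al := by
  intro x
  obtain ⟨x, rfl⟩ := Submodule.Quotient.mk_surjective _ x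
  induction x using LocalizedModule.induction_on with
  | h r s =>
    obtain ⟨_, n, rfl⟩ := s
    obtain ⟨f, g, h, l, rfl⟩ := co_surj r
    exact ⟨_, al_fr f g h l n⟩

lemma redL_surj : Function.Surjective redL := by
  intro x
  induction x using LaurentPolynomial.induction_on_mul_T with
  | mul_T f n =>
    obtain ⟨g, rfl⟩ := red_surj f
    exact ⟨fr g n, redL_fr g n⟩

lemma bz_surj : Function.Surjective bz := Submodule.mkQ_surjective _
lemma bf_surj : Function.Surjective bf := 
  (Submodule.Quotient.mk_surjective _).comp redL_surj

lemma be_surj : Function.Surjective be :=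
  (bz_surj.prodMap bz_surj).prodMap (bf_surj.prodMap bf_surj)

lemma tl_iff {R : Type*} [CommRing R] (f : Polynomial R) (n : ℕ) :
    Polynomial.toLaurent f * LaurentPolynomial.T (-n) ∈ LinearMap.range
      (Algebra.linearMap (Polynomial R) (LaurentPolynomial R)) ↔
    ∃ g, f = Polynomial.X ^ n * g := by
  simp only [LinearMap.mem_range, Algebra.linearMap_apply,
    LaurentPolynomial.algebraMap_eq_toLaurent]
  refine exists_congr fun g => ?_
  rw [← Polynomial.toLaurent_inj f, map_mul, Polynomial.toLaurent_X_pow, LaurentPolynomial.T_mul]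
  constructor
  · intro h
    rw [h, LaurentPolynomial.mul_T_assoc]; simp
  · intro h
    rw [h, LaurentPolynomial.mul_T_assoc]; simp

lemma bz_fr (f : PZ) (n : ℕ) : bz (fr f n) = 0 ↔ ∃ g, f = Polynomial.X ^ n * g := by
  rw [← tl_iff]
  exact Submodule.Quotient.mk_eq_zero _

lemma bf_fr (f : PZ) (n : ℕ) : bf (fr f n) = 0 ↔ ∃ g : PZ, red (f - Polynomial.X ^ n * g) = 0 := by
  have h1 : bf (fr f n) = 0 ↔ ∃ g, red f = Polynomial.X ^ n * g := by
    rw [← tl_iff]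
    change (Submodule.Quotient.mk (redL (fr f n)) : Qmod) = 0 ↔ _
    rw [redL_fr]
    exact Submodule.Quotient.mk_eq_zero _
  rw [h1, red_surj.exists]
  refine exists_congr fun g => ?_
  rw [map_sub, map_mul, sub_eq_zero]
  simp [red]

lemma mk_mem (r : Rko) (n : ℕ) :
    (LocalizedModule.mk r (kpow n) : Loc koB Rko) ∈ LinearMap.range (locMap koB Rko) ↔
    ∃ r', r = koB ^ n * r' := by
  simp only [LinearMap.mem_range, LocalizedModule.mkLinearMap_apply]
  refine exists_congr fun r' => ?_
  rw [LocalizedModule.mk_eq]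
  constructor
  · rintro ⟨⟨_, m, rfl⟩, h⟩
    have h' : koB ^ m * (koB ^ n * r') = koB ^ m * (1 * r) := h
    rw [mul_cancel_left_mem_nonZeroDivisors (pow_mem koB_nzd m)] at h'
    rw [h', one_mul]
  · rintro rfl
    refine ⟨1, ?_⟩
    change 1 * (koB ^ n * r') = 1 * (1 * (koB ^ n * r'))
    ring

lemma ker_eq : LinearMap.ker al = LinearMap.ker be := by
  ext d
  obtain ⟨f, g, h, l, n, rfl⟩ := fr_surj4 d
  have hb : be ((fr f n, fr g n), (fr h n, fr l n)) =
    ((bz (fr f n), bz (fr g n)), (bf (fr h n), bf (fr l n))) := rfl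
  rw [LinearMap.mem_ker, LinearMap.mem_ker, al_fr, hb, Submodule.Quotient.mk_eq_zero, mk_mem]
  simp only [Prod.mk_eq_zero, bz_fr, bf_fr]
  rw [← ev_X, ← map_pow]
  constructor
  · rintro ⟨r, hr⟩
    obtain ⟨f', g', h', l', rfl⟩ := co_surj r
    rw [co_mul, ← sub_eq_zero, co_sub] at hr
    obtain ⟨a, b, c, d⟩ := co_inj hr
    exact ⟨⟨⟨f', sub_eq_zero.1 a⟩, ⟨g', sub_eq_zero.1 b⟩⟩, ⟨h', c⟩, ⟨l', d⟩⟩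
  · rintro ⟨⟨⟨f', a⟩, ⟨g', b⟩⟩, ⟨h', c⟩, ⟨l', d⟩⟩
    refine ⟨co f' g' h' l', ?_⟩
    rw [co_mul, ← sub_eq_zero, co_sub]
    exact co_zero (sub_eq_zero.2 a) (sub_eq_zero.2 b) c d

def ee : CokLoc koB Rko ≃ₗ[PZ] (QZ × QZ) × (Qmod × Qmod) :=
  (al.quotKerEquivOfSurjective al_surj).symm ≪≫ₗ Submodule.quotEquivOfEq _ _ ker_eq ≪≫ₗ
    be.quotKerEquivOfSurjective be_surj

lemma ee_al (d : DD) : ee (al d) = be d := by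
  have : (al.quotKerEquivOfSurjective al_surj).symm (al d) = Submodule.Quotient.mk d := by
    rw [LinearEquiv.symm_apply_eq]; rfl
  simp only [ee, LinearEquiv.trans_apply, this]
  rfl

lemma fr_zero (n : ℕ) : fr 0 n = 0 := by simp [fr]

lemma ee_co (f g h l : PZ) : ee (Submodule.Quotient.mk
      (LocalizedModule.mk (co f g h l) ⟨koB, Submonoid.mem_powers _⟩)) =
    ((bz (fr f 1), bz (fr g 1)), (bf (fr h 1), bf (fr l 1))) := by
  have : (⟨koB, Submonoid.mem_powers _⟩ : SB) = kpow 1 := by ext; simp [kpow]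
  rw [this, ← al_fr, ee_al]
  rfl

lemma bz_one : bz (fr 1 1) = Submodule.Quotient.mk (LaurentPolynomial.T (-1)) := by
  simp [fr, bz]

lemma bf_one : bf (fr 1 1) = Submodule.Quotient.mk (LaurentPolynomial.T (-1)) := by
  change (Submodule.Quotient.mk (redL (fr 1 1)) : Qmod) = _
  rw [redL_fr]; simp [frF]

/-- `B` is a nonzerodivisor on `R_ko`, and the cokernel of the localization map
`R_ko → (R_ko)_B` is isomorphic as a `ℤ₂[B]`-module to
`(ℤ₂[B,B⁻¹]/ℤ₂[B])² ⊕ ((ℤ/2)[B,B⁻¹]/(ℤ/2)[B])²`, the two pairs of summands being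
generated by the images of `1/B`, `A/B` and `η/B`, `η²/B` respectively. -/
theorem Rko_cokLoc_B :
    koB ∈ nonZeroDivisors Rko ∧
    ∃ e : CokLoc koB Rko ≃ₗ[Polynomial ℤ_[2]] (QZ × QZ) × (Qmod × Qmod),
      e (Submodule.Quotient.mk
          (LocalizedModule.mk (1 : Rko) ⟨koB, Submonoid.mem_powers _⟩)) =
        ((Submodule.Quotient.mk (LaurentPolynomial.T (-1)), 0), (0, 0)) ∧
      e (Submodule.Quotient.mk
          (LocalizedModule.mk koA ⟨koB, Submonoid.mem_powers _⟩)) =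
        ((0, Submodule.Quotient.mk (LaurentPolynomial.T (-1))), (0, 0)) ∧
      e (Submodule.Quotient.mk
          (LocalizedModule.mk koEta ⟨koB, Submonoid.mem_powers _⟩)) =
        ((0, 0), (Submodule.Quotient.mk (LaurentPolynomial.T (-1)), 0)) ∧
      e (Submodule.Quotient.mk
          (LocalizedModule.mk (koEta ^ 2) ⟨koB, Submonoid.mem_powers _⟩)) =
        ((0, 0), (0, Submodule.Quotient.mk (LaurentPolynomial.T (-1)))) := by
  have c1 : (1 : Rko) = co 1 0 0 0 := by simp only [co, map_zero, map_one]; ring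
  have c2 : koA = co 0 1 0 0 := by simp only [co, map_zero, map_one]; ring
  have c3 : koEta = co 0 0 1 0 := by simp only [co, map_zero, map_one]; ring
  have c4 : koEta ^ 2 = co 0 0 0 1 := by simp only [co, map_zero, map_one]; ring
  refine ⟨koB_nzd, ee, ?_, ?_, ?_, ?_⟩
  · rw [c1, ee_co, fr_zero, map_zero, map_zero, bz_one]
  · rw [c2, ee_co, fr_zero, map_zero, map_zero, bz_one]
  · rw [c3, ee_co, fr_zero, map_zero, map_zero, bf_one]
  · rw [c4, ee_co, fr_zero, map_zero, map_zero, bf_one]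

end
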